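/- Fix ε ∈ (0, ε₀] such that p_{ε,i} < 1 for all i ∈ X. Define p̃_{ε,ij} = P_i(η_{ε,1} = j, ζ_{ε,1} = 0)/(1 − p_{ε,i}), which is a stochastic matrix, and let η̃_{ε,n} be a homogeneous Markov chain on X with transition matrix ‖p̃_{ε,ij}‖ and the same initial distribution q̄_ε as η_{ε,n}. Then: (a) for every nonnegative integer n, P(ν_ε > n) = E ∏_{k=1}^n (1 − p_{ε, η̃_{ε,k−1}}); and (b) |p_{ε,ij} − p̃_{ε,ij}| ≤ 2p_{ε,i}/(1 − p_{ε,i}) for all i, j ∈ X. -/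

import Mathlib

open MeasureTheory Filter Set
open scoped Topology ENNReal

noncomputable section

/-!
Both sides of (a) are sums over the finite paths `(i₀, …, iₙ)`. Conditioning each step on the
absence of a rare event divides the weight `R i j 0` by `1 - p i`, and the factor `1 - p i` in the
expectation restores it, so the two sums agree path by path. For (b), `R i j 0 = (1 - p i) * p̃ i j`
gives `p i j - p̃ i j = R i j 1 - p i * p̃ i j`, a difference of two numbers in `[0, p i]`.
-/

section Paths

variable {X Ω : Type*} {n : ℕ}

/-- The infinite path that follows the finite path `v` of length `n` and then stays at its
endpoint. It serves to write cylinder events of a process, which are indexed by infinite paths,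
as events indexed by a countable type. -/
def extendPath (v : Fin (n + 1) → X) (k : ℕ) : X :=
  v (Fin.clamp k n)

lemma eq_iff_forall_le_eq_extendPath (x : ℕ → X) (v : Fin (n + 1) → X) :
    (fun k : Fin (n + 1) => x k) = v ↔ ∀ k ≤ n, x k = extendPath v k := by
  constructor
  · rintro rfl k hk
    simp [extendPath, Fin.clamp, hk]
  · intro h
    funext k
    have hk : (k : ℕ) ≤ n := k.is_le
    simp [h k hk, extendPath, Fin.clamp, hk]

variable [MeasurableSpace X] [MeasurableSingletonClass X] [MeasurableSpace Ω]
  {η : ℕ → Ω → X}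

lemma measurableSet_forall_le_eq (hη : ∀ k, Measurable (η k)) (n : ℕ) (x : ℕ → X) :
    MeasurableSet {ω | ∀ k ≤ n, η k ω = x k} := by
  simp only [ofPred_forall]
  exact .iInter fun k => .iInter fun _ => hη k (measurableSet_singleton (x k))

variable [Countable X]

lemma lintegral_path_eq_tsum (hη : ∀ k, Measurable (η k)) (μ : Measure Ω)
    {F : (ℕ → X) → ℝ≥0∞} (hF : DependsOn F (Iic n)) :
    ∫⁻ ω, F (fun k => η k ω) ∂μ =
      ∑' v : Fin (n + 1) → X, F (extendPath v) * μ {ω | ∀ k ≤ n, η k ω = extendPath v k} := by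
  let path : Ω → Fin (n + 1) → X := fun ω k => η k ω
  have hpath : Measurable path := measurable_pi_lambda _ fun k => hη k
  have hcyl (v : Fin (n + 1) → X) :
      path ⁻¹' {v} = {ω | ∀ k ≤ n, η k ω = extendPath v k} :=
    Set.ext fun ω => eq_iff_forall_le_eq_extendPath (fun k => η k ω) v
  calc ∫⁻ ω, F (fun k => η k ω) ∂μ
      = ∫⁻ ω, F (extendPath (path ω)) ∂μ :=
        lintegral_congr fun ω => hF fun k hk =>
          (eq_iff_forall_le_eq_extendPath (fun k => η k ω) (path ω)).1 rfl k hk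
    _ = ∫⁻ v, F (extendPath v) ∂(μ.map path) :=
        (lintegral_map (measurable_of_countable fun v => F (extendPath v)) hpath).symm
    _ = _ := by
        simp only [lintegral_countable', Measure.map_apply hpath (measurableSet_singleton _), hcyl]

lemma measure_eq_tsum_inter_path (hη : ∀ k, Measurable (η k)) (μ : Measure Ω) (n : ℕ)
    (A : Set Ω) :
    μ A = ∑' v : Fin (n + 1) → X, μ (A ∩ {ω | ∀ k ≤ n, η k ω = extendPath v k}) := by
  have h := lintegral_path_eq_tsum hη (μ.restrict A) (F := fun _ => 1)
    (n := n) fun _ _ _ => rfl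
  simpa only [lintegral_const, one_mul, Measure.restrict_apply_univ, inter_comm,
    Measure.restrict_apply (measurableSet_forall_le_eq hη n _)] using h

end Paths

section Processes

variable {X M Ω : Type*} [MeasurableSpace Ω]

/-- Under `μ`, the process `η` is a homogeneous Markov chain with initial distribution `q` and
transition probabilities `p`, expressed by its finite-dimensional distributions. -/
def IsMarkovChain (η : ℕ → Ω → X) (μ : Measure Ω) (q : X → ℝ) (p : X → X → ℝ) : Prop :=
  ∀ (n : ℕ) (x : ℕ → X), μ {ω | ∀ k ≤ n, η k ω = x k} =
    ENNReal.ofReal (q (x 0) * ∏ k ∈ Finset.Icc 1 n, p (x (k - 1)) (x k))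

/-- Under the laws `Pstart i`, the process `(η, ζ)` started from `η 0 = i` is a Markov renewal
process with transition probabilities `R i j ι = P(η (n+1) = j, ζ (n+1) = ι | η n = i)`. The mark
`ζ 0` is left unconstrained. -/
def IsMarkovRenewal (η : ℕ → Ω → X) (ζ : ℕ → Ω → M) (Pstart : X → Measure Ω)
    (R : X → X → M → ℝ) : Prop :=
  ∀ (n : ℕ) (x : ℕ → X) (z : ℕ → M),
    Pstart (x 0) {ω | ∀ k ≤ n, η k ω = x k ∧ (1 ≤ k → ζ k ω = z k)} =
      ENNReal.ofReal (∏ k ∈ Finset.Icc 1 n, R (x (k - 1)) (x k) (z k))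

variable {η : ℕ → Ω → X} {ζ : ℕ → Ω → M} {Pstart : X → Measure Ω} {R : X → X → M → ℝ}
  [MeasurableSpace X] [MeasurableSingletonClass X] [∀ i, IsProbabilityMeasure (Pstart i)]

lemma IsMarkovRenewal.ae_start_eq (h : IsMarkovRenewal η ζ Pstart R) (hη : Measurable (η 0))
    (i : X) : ∀ᵐ ω ∂Pstart i, η 0 ω = i := by
  obtain ⟨ω₀⟩ := (Pstart i).nonempty_of_neZero
  have hstart : Pstart i {ω | η 0 ω = i} = 1 := by
    simpa using h 0 (fun _ => i) (fun _ => ζ 0 ω₀)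
  exact (mem_ae_iff_prob_eq_one (hη (measurableSet_singleton i))).2 hstart

lemma IsMarkovRenewal.measure_sum_path [Countable X] (h : IsMarkovRenewal η ζ Pstart R)
    (hη : Measurable (η 0)) {q : X → ℝ} (hq : ∀ i, 0 ≤ q i) (n : ℕ) (x : ℕ → X) (z : ℕ → M) :
    Measure.sum (fun i => ENNReal.ofReal (q i) • Pstart i)
        {ω | ∀ k ≤ n, η k ω = x k ∧ (1 ≤ k → ζ k ω = z k)} =
      ENNReal.ofReal (q (x 0) * ∏ k ∈ Finset.Icc 1 n, R (x (k - 1)) (x k) (z k)) := by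
  have hnull (i : X) (hi : i ≠ x 0) :
      Pstart i {ω | ∀ k ≤ n, η k ω = x k ∧ (1 ≤ k → ζ k ω = z k)} = 0 :=
    measure_eq_zero_iff_ae_notMem.2 <| (h.ae_start_eq hη i).mono fun ω hstart hω =>
      hi (hstart.symm.trans (hω 0 n.zero_le).1)
  rw [Measure.sum_apply_of_countable, tsum_eq_single (x 0) fun i hi => by simp [hnull i hi],
    Measure.smul_apply, smul_eq_mul, h n x z, ENNReal.ofReal_mul (hq _)]

end Processes

section RareEvents

variable {X : Type*}

/-- The rare-event probability `p i = P_i(ζ 1 = 1)` of the transition probabilities `R`, the mark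
`true` standing for a rare event. -/
def rareProb (R : X → X → Bool → ℝ) (i : X) : ℝ :=
  ∑' j, R i j true

/-- The transition probabilities `p̃ i j` of the embedded chain conditioned on no rare event
occurring. When `rareProb R i = 1` the value is the meaningless `R i j false / 0 = 0`. -/
def condTransition (R : X → X → Bool → ℝ) (i j : X) : ℝ :=
  R i j false / (1 - rareProb R i)

variable {R : X → X → Bool → ℝ}

lemma rareProb_nonneg (hR : ∀ i j ι, 0 ≤ R i j ι) (i : X) : 0 ≤ rareProb R i :=
  tsum_nonneg fun j => hR i j true

lemma prod_one_sub_rareProb_nonneg (hp : ∀ i, rareProb R i < 1) (x : ℕ → X) (n : ℕ) :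
    0 ≤ ∏ k ∈ Finset.Icc 1 n, (1 - rareProb R (x (k - 1))) :=
  Finset.prod_nonneg fun k _ => sub_nonneg.2 (hp (x (k - 1))).le

lemma condTransition_nonneg (hR : ∀ i j ι, 0 ≤ R i j ι) {i : X} (hp : rareProb R i < 1) (j : X) :
    0 ≤ condTransition R i j :=
  div_nonneg (hR i j false) (sub_nonneg.2 hp.le)

lemma one_sub_rareProb_mul_condTransition {i : X} (hp : rareProb R i < 1) (j : X) :
    (1 - rareProb R i) * condTransition R i j = R i j false :=
  mul_div_cancel₀ _ (sub_pos.2 hp).ne'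

lemma hasSum_rareProb (hR : ∀ i j ι, 0 ≤ R i j ι) {i : X}
    (hsum : HasSum (fun j => R i j false + R i j true) 1) :
    HasSum (fun j => R i j true) (rareProb R i) :=
  (Summable.of_nonneg_of_le (fun j => hR i j true) (fun j => le_add_of_nonneg_left (hR i j false))
    hsum.summable).hasSum

lemma hasSum_condTransition (hR : ∀ i j ι, 0 ≤ R i j ι) {i : X}
    (hsum : HasSum (fun j => R i j false + R i j true) 1) (hp : rareProb R i < 1) :
    HasSum (condTransition R i) 1 := by
  have hfalse : HasSum (fun j => R i j false) (1 - rareProb R i) := by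
    simpa only [add_sub_cancel_right] using hsum.sub (hasSum_rareProb hR hsum)
  rw [← div_self (sub_pos.2 hp).ne']
  exact hfalse.div_const (1 - rareProb R i)

lemma abs_transition_sub_condTransition_le (hR : ∀ i j ι, 0 ≤ R i j ι) {i : X}
    (hsum : HasSum (fun j => R i j false + R i j true) 1) (hp : rareProb R i < 1) (j : X) :
    |(R i j false + R i j true) - condTransition R i j| ≤ rareProb R i := by
  have hrare : R i j true ≤ rareProb R i :=
    le_hasSum (hasSum_rareProb hR hsum) j fun k _ => hR i k true
  have hcond : condTransition R i j ≤ 1 :=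
    le_hasSum (hasSum_condTransition hR hsum hp) j fun k _ => condTransition_nonneg hR hp k
  have hcond₀ := condTransition_nonneg hR hp j
  have hp₀ := rareProb_nonneg hR i
  have hdiff : (R i j false + R i j true) - condTransition R i j =
      R i j true - rareProb R i * condTransition R i j := by
    rw [← one_sub_rareProb_mul_condTransition hp j]
    ring
  rw [hdiff]
  exact abs_sub_le_of_nonneg_of_le (hR i j true) hrare (mul_nonneg hp₀ hcond₀)
    (mul_le_of_le_one_right hp₀ hcond)

lemma le_two_mul_div_one_sub {p : ℝ} (hp₀ : 0 ≤ p) (hp₁ : p < 1) : p ≤ 2 * p / (1 - p) := by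
  rw [le_div_iff₀ (sub_pos.2 hp₁)]
  nlinarith

variable [Countable X] [MeasurableSpace X] [MeasurableSingletonClass X]
  {Ω Ω' : Type*} [MeasurableSpace Ω] [MeasurableSpace Ω']
  {η : ℕ → Ω → X} {ζ : ℕ → Ω → Bool} {Pstart : X → Measure Ω}
  {η' : ℕ → Ω' → X} {P' : Measure Ω'} {q : X → ℝ}

lemma IsMarkovRenewal.measure_sum_no_rare_eq_tsum [∀ i, IsProbabilityMeasure (Pstart i)]
    (h : IsMarkovRenewal η ζ Pstart R) (hη : ∀ k, Measurable (η k)) (hq : ∀ i, 0 ≤ q i) (n : ℕ) :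
    Measure.sum (fun i => ENNReal.ofReal (q i) • Pstart i)
        {ω | ∀ k, 1 ≤ k → k ≤ n → ζ k ω = false} =
      ∑' v : Fin (n + 1) → X, ENNReal.ofReal (q (extendPath v 0) *
        ∏ k ∈ Finset.Icc 1 n, R (extendPath v (k - 1)) (extendPath v k) false) := by
  rw [measure_eq_tsum_inter_path hη _ n]
  refine tsum_congr fun v => ?_
  rw [← h.measure_sum_path (hη 0) hq n (extendPath v) fun _ => false]
  congr 1
  ext ω
  simp only [mem_inter_iff, mem_ofPred_eq]
  grind

lemma IsMarkovChain.lintegral_prod_one_sub_rareProb_eq_tsum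
    (h : IsMarkovChain η' P' q (condTransition R)) (hη' : ∀ k, Measurable (η' k))
    (hp : ∀ i, rareProb R i < 1) (n : ℕ) :
    ∫⁻ ω, ENNReal.ofReal (∏ k ∈ Finset.Icc 1 n, (1 - rareProb R (η' (k - 1) ω))) ∂P' =
      ∑' v : Fin (n + 1) → X, ENNReal.ofReal (q (extendPath v 0) *
        ∏ k ∈ Finset.Icc 1 n, R (extendPath v (k - 1)) (extendPath v k) false) := by
  have hdep : DependsOn (fun x : ℕ → X =>
      ENNReal.ofReal (∏ k ∈ Finset.Icc 1 n, (1 - rareProb R (x (k - 1))))) (Iic n) := by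
    intro x y hxy
    refine congrArg ENNReal.ofReal (Finset.prod_congr rfl fun k hk => ?_)
    rw [hxy (k - 1) ((k.sub_le 1).trans (Finset.mem_Icc.1 hk).2)]
  rw [lintegral_path_eq_tsum hη' P' hdep]
  refine tsum_congr fun v => ?_
  rw [h n, ← ENNReal.ofReal_mul (prod_one_sub_rareProb_nonneg hp _ n),
    mul_left_comm, ← Finset.prod_mul_distrib]
  simp only [one_sub_rareProb_mul_condTransition (hp _)]

lemma integrable_prod_one_sub_rareProb [IsFiniteMeasure P'] (hη' : ∀ k, Measurable (η' k))
    (hR : ∀ i j ι, 0 ≤ R i j ι) (hp : ∀ i, rareProb R i < 1) (n : ℕ) :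
    Integrable (fun ω => ∏ k ∈ Finset.Icc 1 n, (1 - rareProb R (η' (k - 1) ω))) P' := by
  have hmeas : Measurable fun ω => ∏ k ∈ Finset.Icc 1 n, (1 - rareProb R (η' (k - 1) ω)) :=
    Finset.measurable_fun_prod _ fun k _ =>
      (measurable_of_countable fun i => 1 - rareProb R i).comp (hη' (k - 1))
  refine .of_bound hmeas.aestronglyMeasurable 1 (.of_forall fun ω => ?_)
  rw [Real.norm_of_nonneg (prod_one_sub_rareProb_nonneg hp (fun k => η' k ω) n)]
  exact Finset.prod_le_one (fun k _ => sub_nonneg.2 (hp _).le)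
    fun k _ => sub_le_self 1 (rareProb_nonneg hR _)

theorem stmt18_general [∀ i, IsProbabilityMeasure (Pstart i)] [IsFiniteMeasure P']
    (hη : ∀ k, Measurable (η k)) (hη' : ∀ k, Measurable (η' k))
    (hR : ∀ i j ι, 0 ≤ R i j ι) (hsum : ∀ i, HasSum (fun j => R i j false + R i j true) 1)
    (hp : ∀ i, rareProb R i < 1) (hq : ∀ i, 0 ≤ q i)
    (hMRP : IsMarkovRenewal η ζ Pstart R) (hMC : IsMarkovChain η' P' q (condTransition R)) :
    ((∀ i j, 0 ≤ condTransition R i j) ∧ ∀ i, HasSum (condTransition R i) 1) ∧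
    (∀ n : ℕ, (Measure.sum fun i => ENNReal.ofReal (q i) • Pstart i).real
        {ω | ∀ k, 1 ≤ k → k ≤ n → ζ k ω = false} =
      ∫ ω, ∏ k ∈ Finset.Icc 1 n, (1 - rareProb R (η' (k - 1) ω)) ∂P') ∧
    ∀ i j, |(R i j false + R i j true) - condTransition R i j| ≤ rareProb R i := by
  refine ⟨⟨fun i => condTransition_nonneg hR (hp i),
    fun i => hasSum_condTransition hR (hsum i) (hp i)⟩, fun n => ?_,
    fun i => abs_transition_sub_condTransition_le hR (hsum i) (hp i)⟩
  have hnonneg (ω : Ω') : 0 ≤ ∏ k ∈ Finset.Icc 1 n, (1 - rareProb R (η' (k - 1) ω)) :=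
    prod_one_sub_rareProb_nonneg hp (fun k => η' k ω) n
  rw [Measure.real, hMRP.measure_sum_no_rare_eq_tsum hη hq n,
    ← hMC.lintegral_prod_one_sub_rareProb_eq_tsum hη' hp n,
    ← ofReal_integral_eq_lintegral_ofReal (integrable_prod_one_sub_rareProb hη' hR hp n)
      (.of_forall hnonneg),
    ENNReal.toReal_ofReal (integral_nonneg hnonneg)]

end RareEvents

/-- for a fixed Markov renewal process `(η_n, ζ_n)` with transition kernel
`R i j ι = P(η_{n+1} = j, ζ_{n+1} = ι | η_n = i)` and rare-event probabilities
`p_i = Σ_j R i j 1 < 1`, the matrix `p̃ i j = R i j 0 / (1 − p_i)` is stochastic, and if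
`η̃_n` is a Markov chain with transition matrix `p̃` and the same initial distribution `q`,
then `P(ν > n) = E ∏_{k=1}^n (1 − p_{η̃_{k−1}})` and
`|p i j − p̃ i j| ≤ 2 p_i / (1 − p_i)`.  Here `{ν > n}` is the event that no rare event
occurs during the first `n` steps, and `p i j = R i j 0 + R i j 1` are the transition
probabilities of the embedded chain `η_n`. -/
theorem stmt18 {m : ℕ} (hm : 0 < m)
    {Ω : Type} [MeasurableSpace Ω]
    -- the Markov renewal process (η_n, ζ_n), with laws P_i given η_0 = i
    (η : ℕ → Ω → Fin m) (ζ : ℕ → Ω → Bool)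
    (Pstart : Fin m → Measure Ω)
    (hprob : ∀ i, IsProbabilityMeasure (Pstart i))
    (hmeas : ∀ n, Measurable (η n) ∧ Measurable (ζ n))
    (R : Fin m → Fin m → Bool → ℝ)
    (hRnn : ∀ i j ι, 0 ≤ R i j ι)
    (hRsum : ∀ i, ∑ j, (R i j false + R i j true) = 1)
    (hMRP : ∀ n : ℕ, ∀ I : ℕ → Fin m, ∀ Z : ℕ → Bool,
      Pstart (I 0) {ω | ∀ k ≤ n, (η k ω = I k ∧ (1 ≤ k → ζ k ω = Z k))}
        = ENNReal.ofReal (∏ k ∈ Finset.Icc 1 n, R (I (k - 1)) (I k) (Z k)))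
    -- the rare-event probabilities p_i = P_i(ζ_1 = 1) are < 1
    (hpe : ∀ i : Fin m, (∑ j, R i j true) < 1)
    -- the initial distribution q̄ and the law P of the process with initial distribution q̄
    (q : Fin m → ℝ) (hq : (∀ i, 0 ≤ q i) ∧ ∑ i, q i = 1)
    (P : Measure Ω) (hmix : P = ∑ i, ENNReal.ofReal (q i) • Pstart i)
    -- the auxiliary Markov chain η̃ with transition matrix p̃ and initial distribution q̄
    {Ω' : Type} [MeasurableSpace Ω']
    (η' : ℕ → Ω' → Fin m) (P' : Measure Ω')
    (hprob' : IsProbabilityMeasure P')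
    (hmeas' : ∀ n, Measurable (η' n))
    (hMC' : ∀ n : ℕ, ∀ I : ℕ → Fin m,
      P' {ω | ∀ k ≤ n, η' k ω = I k}
        = ENNReal.ofReal (q (I 0) *
            ∏ k ∈ Finset.Icc 1 n, R (I (k - 1)) (I k) false / (1 - ∑ j, R (I (k - 1)) j true))) :
    -- p̃ is a stochastic matrix
    ((∀ i j : Fin m, 0 ≤ R i j false / (1 - ∑ j', R i j' true)) ∧
      ∀ i : Fin m, ∑ j, R i j false / (1 - ∑ j', R i j' true) = 1) ∧
    -- (a) P(ν > n) = E ∏_{k=1}^n (1 − p_{η̃_{k−1}})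
    (∀ n : ℕ,
      (P {ω | ∀ k : ℕ, 1 ≤ k → k ≤ n → ζ k ω = false}).toReal
        = ∫ ω, ∏ k ∈ Finset.Icc 1 n, (1 - ∑ j, R (η' (k - 1) ω) j true) ∂P') ∧
    -- (b) |p_{ij} − p̃_{ij}| ≤ 2 p_i / (1 − p_i)
    (∀ i j : Fin m,
      |(R i j false + R i j true) - R i j false / (1 - ∑ j', R i j' true)|
        ≤ 2 * (∑ j', R i j' true) / (1 - ∑ j', R i j' true)) := by
  have hrare (i : Fin m) : ∑ j, R i j true = rareProb R i := (tsum_fintype _).symm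
  simp only [hrare] at hpe hMC' ⊢
  obtain ⟨⟨hnonneg, hsum⟩, hsurvival, hdist⟩ := stmt18_general (fun n => (hmeas n).1) hmeas' hRnn
    (fun i => hRsum i ▸ hasSum_fintype _) hpe hq.1 hMRP hMC'
  rw [Measure.sum_fintype, ← hmix] at hsurvival
  exact ⟨⟨hnonneg, fun i => (hasSum_fintype _).unique (hsum i)⟩, hsurvival, fun i j =>
    (hdist i j).trans (le_two_mul_div_one_sub (rareProb_nonneg hRnn i) (hpe i))⟩
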